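/- Let D ⊆ ℂ be a nonempty open connected set, (c_k) a sequence in D with no accumulation point in D, and (m_k) a sequence of natural numbers. Then there exists a holomorphic function g : D → ℂ whose zero set is exactly {c_k : k ∈ ℕ} and such that the order of vanishing of g at c_k equals m_k for each k. -/

import Mathlib

open Filter

/-!
Enumerate the prescribed zeros `c i` with multiplicities `m i`. Away from a zero `c`, either
`z ↦ z / c` or `z ↦ (c - a) / (z - a)`, with `a` a point of `Dᶜ` nearest to `c`, takes the value
`1` only at `c`, to first order, and it is at most `1 / 2` on each compact subset of `D` as soon as
`c` lies outside a larger compact subset. Substituting it into a Weierstrass elementary factor of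
high degree gives a holomorphic function on `D` with the single zero `c` which is as close to `1`
as desired on those compact subsets. The product of these functions over all `i` converges locally
uniformly, and near any point only finitely many factors contribute to its order of vanishing.
-/

open Set

section Exhaustion

variable {E : Type*} [SeminormedAddCommGroup E] {D : Set E} {r s : ℝ}

/-- The points of `D` of norm at most `r` and at distance at least `1 / r` from the complement
of `D`. For open `D` these sets exhaust `D` as `r` grows. The distance condition is written
without division so that it needs no convention at `r = 0`. -/
def exhaustingSet (D : Set E) (r : ℝ) : Set E :=
  {z | ‖z‖ ≤ r ∧ ∀ a ∉ D, 1 ≤ r * dist z a}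

lemma exhaustingSet_subset : exhaustingSet D r ⊆ D := by
  intro z hz
  by_contra hzD
  have := hz.2 z hzD
  rw [dist_self, mul_zero] at this
  exact zero_lt_one.not_ge this

lemma exhaustingSet_mono (hrs : r ≤ s) : exhaustingSet D r ⊆ exhaustingSet D s :=
  fun _ hz ↦ ⟨hz.1.trans hrs, fun a ha ↦ (hz.2 a ha).trans (by gcongr)⟩

lemma isClosed_exhaustingSet : IsClosed (exhaustingSet D r) := by
  have : exhaustingSet D r = {z | ‖z‖ ≤ r} ∩ ⋂ a ∈ Dᶜ, {z | 1 ≤ r * dist z a} := by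
    ext z
    simp [exhaustingSet]
  rw [this]
  exact (isClosed_le (by fun_prop) (by fun_prop)).inter <|
    isClosed_biInter fun a _ ↦ isClosed_le (by fun_prop) (by fun_prop)

lemma isCompact_exhaustingSet [ProperSpace E] : IsCompact (exhaustingSet D r) :=
  (isCompact_closedBall (0 : E) r).of_isClosed_subset isClosed_exhaustingSet
    fun _ hz ↦ mem_closedBall_zero_iff.2 hz.1

lemma exists_subset_exhaustingSet {K : Set E} (hK : IsCompact K) (hD : IsOpen D)
    (hKD : K ⊆ D) : ∃ r, 0 ≤ r ∧ K ⊆ exhaustingSet D r := by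
  obtain ⟨δ, hδ, hthick⟩ := hK.exists_thickening_subset_open hD hKD
  obtain ⟨R, hR⟩ := hK.isBounded.exists_norm_le
  have hδr : δ⁻¹ ≤ max R δ⁻¹ := le_max_right _ _
  refine ⟨max R δ⁻¹, (inv_pos.2 hδ).le.trans hδr, fun z hz ↦
    ⟨(hR z hz).trans (le_max_left _ _), fun a ha ↦ ?_⟩⟩
  have hdist : δ ≤ dist z a := by
    by_contra! hlt
    exact ha (hthick (Metric.mem_thickening_iff.2 ⟨z, hz, by rwa [dist_comm]⟩))
  calc 1 = δ⁻¹ * δ := (inv_mul_cancel₀ hδ.ne').symm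
    _ ≤ max R δ⁻¹ * dist z a := by gcongr

end Exhaustion

section ElementaryFactor

open Complex

/-- The Weierstrass elementary factor `(1 - u) exp (u + u² / 2 + ⋯ + uᵖ / p)`. The exponent is
`-logTaylor (p + 1) (-u)`, since `logTaylor (p + 1)` is the Taylor polynomial of degree `p` of
`log (1 + ·)`. -/
noncomputable def elementaryFactor (p : ℕ) (u : ℂ) : ℂ :=
  (1 - u) * exp (-logTaylor (p + 1) (-u))

lemma differentiable_logTaylor : ∀ n : ℕ, Differentiable ℂ (logTaylor n)
  | 0 => logTaylor_zero ▸ differentiable_const 0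
  | n + 1 => fun z ↦ (hasDerivAt_logTaylor n z).differentiableAt

lemma differentiable_elementaryFactor (p : ℕ) : Differentiable ℂ (elementaryFactor p) := by
  have := differentiable_logTaylor (p + 1)
  unfold elementaryFactor
  fun_prop

lemma elementaryFactor_eq_exp (p : ℕ) {u : ℂ} (hu : ‖u‖ < 1) :
    elementaryFactor p u = exp (log (1 + -u) - logTaylor (p + 1) (-u)) := by
  have hne : 1 + -u ≠ 0 := slitPlane_ne_zero (mem_slitPlane_of_norm_lt_one (by rwa [norm_neg]))
  rw [elementaryFactor, sub_eq_add_neg (log _), exp_add, exp_log hne, ← sub_eq_add_neg]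

lemma norm_log_sub_logTaylor_le_of_norm_le (p : ℕ) {z : ℂ} {r : ℝ} (hz : ‖z‖ ≤ r) (hr : r < 1) :
    ‖log (1 + z) - logTaylor (p + 1) z‖ ≤ r ^ (p + 1) * (1 - r)⁻¹ := by
  have hz₁ : ‖z‖ < 1 := hz.trans_lt hr
  have hr₀ : 0 ≤ r := (norm_nonneg z).trans hz
  have hz_pos : 0 < 1 - ‖z‖ := sub_pos.2 hz₁
  calc ‖log (1 + z) - logTaylor (p + 1) z‖
      ≤ ‖z‖ ^ (p + 1) * (1 - ‖z‖)⁻¹ / (p + 1) := norm_log_sub_logTaylor_le p hz₁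
    _ ≤ ‖z‖ ^ (p + 1) * (1 - ‖z‖)⁻¹ :=
        div_le_self (mul_nonneg (by positivity) (inv_nonneg.2 hz_pos.le))
          (le_add_of_nonneg_left p.cast_nonneg)
    _ ≤ r ^ (p + 1) * (1 - r)⁻¹ := by gcongr

lemma tendstoUniformlyOn_elementaryFactor {r : ℝ} (hr : r < 1) :
    TendstoUniformlyOn elementaryFactor 1 atTop (Metric.closedBall 0 r) := by
  rcases lt_or_ge r 0 with hr₀ | hr₀
  · rw [Metric.closedBall_eq_empty.2 hr₀]
    exact tendstoUniformlyOn_empty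
  have hlim : Tendsto (fun p : ℕ ↦ r ^ (p + 1) * (1 - r)⁻¹) atTop (nhds 0) := by
    simpa only [zero_mul, Function.comp_def] using
      ((tendsto_pow_atTop_nhds_zero_of_lt_one hr₀ hr).comp
        (tendsto_add_atTop_nat 1)).mul_const (1 - r)⁻¹
  refine Metric.tendstoUniformlyOn_iff.2 fun ε hε ↦ ?_
  filter_upwards [hlim.eventually_le_const one_pos, hlim.eventually_lt_const (half_pos hε)]
    with p hp_one hp_half u hu
  have hu : ‖u‖ ≤ r := mem_closedBall_zero_iff.1 hu
  have hlog := norm_log_sub_logTaylor_le_of_norm_le p ((norm_neg u).trans_le hu) hr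
  rw [Pi.one_apply, dist_comm, dist_eq_norm, elementaryFactor_eq_exp p (hu.trans_lt hr)]
  calc ‖exp (log (1 + -u) - logTaylor (p + 1) (-u)) - 1‖
      ≤ 2 * ‖log (1 + -u) - logTaylor (p + 1) (-u)‖ :=
        norm_exp_sub_one_le (hlog.trans hp_one)
    _ ≤ 2 * (r ^ (p + 1) * (1 - r)⁻¹) := by gcongr
    _ < ε := by linarith

lemma analyticOrderAt_elementaryFactor_comp (p : ℕ) {u : ℂ → ℂ} {z₀ : ℂ}
    (hu : AnalyticAt ℂ u z₀) :
    analyticOrderAt (fun z ↦ elementaryFactor p (u z)) z₀ =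
      analyticOrderAt (fun z ↦ 1 - u z) z₀ := by
  have hlog : AnalyticAt ℂ (fun z ↦ logTaylor (p + 1) (-u z)) z₀ :=
    ((differentiable_logTaylor (p + 1)).analyticAt (-u z₀)).comp_of_eq hu.fun_neg rfl
  have hexp : AnalyticAt ℂ (fun z ↦ exp (-logTaylor (p + 1) (-u z))) z₀ := hlog.neg.cexp
  have hexp_order : analyticOrderAt (fun z ↦ exp (-logTaylor (p + 1) (-u z))) z₀ = 0 :=
    hexp.analyticOrderAt_eq_zero.2 (exp_ne_zero _)
  calc analyticOrderAt (fun z ↦ elementaryFactor p (u z)) z₀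
      = analyticOrderAt (fun z ↦ 1 - u z) z₀ +
          analyticOrderAt (fun z ↦ exp (-logTaylor (p + 1) (-u z))) z₀ :=
        analyticOrderAt_mul (analyticAt_const.sub hu) hexp
    _ = analyticOrderAt (fun z ↦ 1 - u z) z₀ := by rw [hexp_order, add_zero]

end ElementaryFactor

section SingleZero

variable {D : Set ℂ}

lemma analyticOrderAt_sub_mul {c z₀ : ℂ} {w : ℂ → ℂ} (hw : AnalyticAt ℂ w z₀) (hw₀ : w z₀ ≠ 0) :
    analyticOrderAt (fun z ↦ (z - c) * w z) z₀ = if z₀ = c then 1 else 0 := by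
  have hmul : analyticOrderAt (fun z ↦ (z - c) * w z) z₀ =
      analyticOrderAt (· - c) z₀ + analyticOrderAt w z₀ :=
    analyticOrderAt_mul (by fun_prop) hw
  rw [hmul, hw.analyticOrderAt_eq_zero.2 hw₀, add_zero]
  split_ifs with h
  · rw [h, analyticOrderAt_id_sub_const_self]
  · exact analyticOrderAt_id_sub_const_of_ne h

lemma norm_div_le_half_of_mem_exhaustingSet {c z : ℂ} {r : ℝ} (hc : c ∈ exhaustingSet D ‖c‖)
    (hcr : c ∉ exhaustingSet D (2 * r)) (hz : z ∈ exhaustingSet D r) : ‖z / c‖ ≤ 1 / 2 := by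
  have hr : 2 * r < ‖c‖ := by
    by_contra! hle
    exact hcr (exhaustingSet_mono hle hc)
  rw [norm_div]
  exact div_le_of_le_mul₀ (norm_nonneg c) (by norm_num) (by linarith [hz.1])

lemma norm_div_sub_le_half_of_notMem_exhaustingSet {c z a : ℂ} {r : ℝ} (hr : 0 ≤ r) (ha : a ∉ D)
    (hnearest : ∀ b ∉ D, dist c a ≤ dist c b) (hc : c ∉ exhaustingSet D ‖c‖)
    (hcr : c ∉ exhaustingSet D (2 * r)) (hz : z ∈ exhaustingSet D r) :
    ‖(c - a) / (z - a)‖ ≤ 1 / 2 := by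
  have dist_lt_of_notMem : ∀ s, 0 ≤ s → ‖c‖ ≤ s → c ∉ exhaustingSet D s → s * dist c a < 1 := by
    intro s hs hcs hmem
    by_contra! hle
    exact hmem ⟨hcs, fun b hb ↦ hle.trans (by gcongr; exact hnearest b hb)⟩
  have hca : 2 * r * dist c a < 1 := by
    rcases le_total ‖c‖ (2 * r) with hcr' | hcr'
    · exact dist_lt_of_notMem _ (by positivity) hcr' hcr
    · calc 2 * r * dist c a ≤ ‖c‖ * dist c a := by gcongr
        _ < 1 := dist_lt_of_notMem _ (norm_nonneg c) le_rfl hc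
  have hdist : 2 * dist c a < dist z a :=
    lt_of_mul_lt_mul_left (by linarith [hz.2 a ha]) hr
  rw [norm_div, ← dist_eq_norm, ← dist_eq_norm]
  exact div_le_of_le_mul₀ dist_nonneg (by norm_num) (by linarith)

lemma exists_nonvanishing_cofactor (hD : IsOpen D) (c : ℂ) :
    ∃ w : ℂ → ℂ, DifferentiableOn ℂ w D ∧ (∀ z ∈ D, w z ≠ 0) ∧
      ∀ r, 0 ≤ r → c ∉ exhaustingSet D (2 * r) →
        ∀ z ∈ exhaustingSet D r, ‖1 - (z - c) * w z‖ ≤ 1 / 2 := by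
  by_cases hc : c ∈ exhaustingSet D ‖c‖
  · rcases eq_or_ne c 0 with rfl | hc₀
    · refine ⟨1, differentiableOn_const 1, fun _ _ ↦ one_ne_zero, fun r hr hcr ↦ ?_⟩
      rw [norm_zero] at hc
      exact absurd (exhaustingSet_mono (by positivity) hc) hcr
    · refine ⟨fun _ ↦ -c⁻¹, differentiableOn_const _, fun _ _ ↦ neg_ne_zero.2 (inv_ne_zero hc₀),
        fun r _ hcr z hz ↦ ?_⟩
      have hquot : 1 - (z - c) * -c⁻¹ = z / c := by
        field_simp
        ring
      rw [hquot]
      exact norm_div_le_half_of_mem_exhaustingSet hc hcr hz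
  · have hcompl : (Dᶜ).Nonempty := by
      by_contra! hempty
      exact hc ⟨le_rfl, fun a ha ↦ (hempty.subset ha).elim⟩
    obtain ⟨a, ha, hdist⟩ := hD.isClosed_compl.exists_infDist_eq_dist hcompl c
    have hnearest : ∀ b ∉ D, dist c a ≤ dist c b := fun b hb ↦
      hdist.ge.trans (Metric.infDist_le_dist_of_mem hb)
    have hsub : ∀ z ∈ D, z - a ≠ 0 := fun z hz ↦ sub_ne_zero.2 (ne_of_mem_of_not_mem hz ha)
    refine ⟨fun z ↦ (z - a)⁻¹, DifferentiableOn.fun_inv (by fun_prop) hsub,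
      fun z hz ↦ inv_ne_zero (hsub z hz), fun r hr hcr z hz ↦ ?_⟩
    have hquot : 1 - (z - c) * (z - a)⁻¹ = (c - a) / (z - a) := by
      have := hsub z (exhaustingSet_subset hz)
      field_simp
      ring
    rw [hquot]
    exact norm_div_sub_le_half_of_notMem_exhaustingSet hr ha hnearest hc hcr hz

lemma exists_analyticOrderAt_eq_ite (hD : IsOpen D) (c : ℂ) (m : ℕ) {ε : ℝ} (hε : 0 < ε) :
    ∃ f : ℂ → ℂ, DifferentiableOn ℂ f D ∧
      (∀ z ∈ D, analyticOrderAt f z = if z = c then (m : ℕ∞) else 0) ∧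
      ∀ r, 0 ≤ r → c ∉ exhaustingSet D (2 * r) →
        ∀ z ∈ exhaustingSet D r, ‖f z - 1‖ ≤ ε := by
  obtain ⟨w, hw, hw₀, hw_bound⟩ := exists_nonvanishing_cofactor hD c
  have hu : DifferentiableOn ℂ (fun z ↦ 1 - (z - c) * w z) D := by fun_prop
  obtain ⟨δ, hδ, hpow⟩ := Metric.continuousAt_iff.1 (continuousAt_pow (1 : ℂ) m) ε hε
  obtain ⟨p, hp⟩ := (Metric.tendstoUniformlyOn_iff.1
    (tendstoUniformlyOn_elementaryFactor (r := 1 / 2) (by norm_num)) δ hδ).exists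
  have hfactor := (differentiable_elementaryFactor p).comp_differentiableOn hu
  refine ⟨fun z ↦ elementaryFactor p (1 - (z - c) * w z) ^ m, hfactor.pow m, fun z hz ↦ ?_,
    fun r hr hc z hz ↦ ?_⟩
  · have hD_nhds := hD.mem_nhds hz
    have horder : analyticOrderAt (fun z ↦ elementaryFactor p (1 - (z - c) * w z)) z =
        if z = c then 1 else 0 := by
      rw [analyticOrderAt_elementaryFactor_comp p (hu.analyticAt hD_nhds)]
      simpa only [sub_sub_cancel] using analyticOrderAt_sub_mul (hw.analyticAt hD_nhds) (hw₀ z hz)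
    have hpow_order := analyticOrderAt_pow (hfactor.analyticAt hD_nhds) m
    refine hpow_order.trans ?_
    rw [Function.comp_def, horder]
    simp
  · have hclose := hp _ (mem_closedBall_zero_iff.2 (hw_bound r hr hc z hz))
    rw [Pi.one_apply, dist_comm] at hclose
    simpa only [one_pow, dist_eq_norm] using (hpow hclose).le

end SingleZero

section InfiniteProduct

lemma analyticOrderAt_finsetProd {𝕜 ι : Type*} [NontriviallyNormedField 𝕜]
    {f : ι → 𝕜 → 𝕜} {z₀ : 𝕜} (s : Finset ι) (hf : ∀ i ∈ s, AnalyticAt 𝕜 (f i) z₀) :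
    analyticOrderAt (∏ i ∈ s, f i) z₀ = ∑ i ∈ s, analyticOrderAt (f i) z₀ := by
  classical
  induction s using Finset.induction_on with
  | empty => simp [analyticOrderAt_eq_zero]
  | insert i s hi ih =>
    have hs : ∀ j ∈ s, AnalyticAt 𝕜 (f j) z₀ := fun j hj ↦ hf j (Finset.mem_insert_of_mem hj)
    rw [Finset.prod_insert hi, Finset.sum_insert hi, ← ih hs]
    exact analyticOrderAt_mul (hf i (Finset.mem_insert_self i s)) (s.analyticAt_prod hs)

variable {ι : Type*} {D : Set ℂ} {F : ι → ℂ → ℂ} {u : ι → ℝ}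

lemma differentiableOn_tprod (hD : IsOpen D) (hF : ∀ i, DifferentiableOn ℂ (F i) D)
    (hu : Summable u)
    (hFu : ∀ K ⊆ D, IsCompact K → ∀ᶠ i in cofinite, ∀ z ∈ K, ‖F i z - 1‖ ≤ u i) :
    DifferentiableOn ℂ (fun z ↦ ∏' i, F i z) D := by
  have hprod : HasProdLocallyUniformlyOn F (fun z ↦ ∏' i, F i z) D := by
    refine hasProdLocallyUniformlyOn_of_forall_compact hD fun K hKD hK ↦ ?_
    simpa only [add_sub_cancel] using hu.hasProdUniformlyOn_one_add hK (hFu K hKD hK)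
      fun i ↦ ((hF i).continuousOn.mono hKD).sub continuousOn_const
  exact TendstoLocallyUniformlyOn.differentiableOn hprod
    (.of_forall fun s ↦ DifferentiableOn.fun_finsetProd fun i _ ↦ hF i) hD

lemma finite_setOf_eq_zero_of_summable_norm_sub_one {a : ι → ℂ}
    (ha : Summable fun i ↦ ‖a i - 1‖) : {i | a i = 0}.Finite := by
  have hne : ∀ᶠ i in cofinite, a i ≠ 0 := by
    filter_upwards [ha.tendsto_cofinite_zero.eventually_lt_const one_pos] with i hi hai
    simp [hai] at hi
  simpa only [eventually_cofinite, not_not] using hne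

lemma prod_mul_tprod_compl_of_summable_norm_sub_one {a : ι → ℂ}
    (ha : Summable fun i ↦ ‖a i - 1‖) (s : Finset ι) :
    (∏ i ∈ s, a i) * ∏' i : ↥(s : Set ι)ᶜ, a i = ∏' i, a i := by
  have htail : Multipliable fun i : ↥(s : Set ι)ᶜ ↦ a i := by
    simpa only [add_sub_cancel] using multipliable_one_add_of_summable
      (f := fun i : ↥(s : Set ι)ᶜ ↦ a i - 1) (ha.subtype _)
  exact ((s.hasProd a).mul_compl htail.hasProd).tprod_eq.symm

lemma tprod_ne_zero_of_summable_norm_sub_one {a : ι → ℂ} (ha : Summable fun i ↦ ‖a i - 1‖)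
    (ha₀ : ∀ i, a i ≠ 0) : ∏' i, a i ≠ 0 := by
  simpa only [add_sub_cancel] using
    tprod_one_add_ne_zero_of_summable (f := fun i ↦ a i - 1) (by simpa using ha₀) ha

lemma summable_norm_sub_one_of_eventually_le (hu : Summable u)
    (hFu : ∀ K ⊆ D, IsCompact K → ∀ᶠ i in cofinite, ∀ z ∈ K, ‖F i z - 1‖ ≤ u i)
    {z : ℂ} (hz : z ∈ D) : Summable fun i ↦ ‖F i z - 1‖ := by
  refine hu.of_norm_bounded_eventually ?_
  filter_upwards [hFu {z} (singleton_subset_iff.2 hz) isCompact_singleton] with i hi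
  rw [norm_norm]
  exact hi z rfl

lemma analyticOrderAt_tprod (hD : IsOpen D) (hF : ∀ i, DifferentiableOn ℂ (F i) D)
    (hu : Summable u)
    (hFu : ∀ K ⊆ D, IsCompact K → ∀ᶠ i in cofinite, ∀ z ∈ K, ‖F i z - 1‖ ≤ u i)
    {z₀ : ℂ} (hz₀ : z₀ ∈ D) :
    analyticOrderAt (fun z ↦ ∏' i, F i z) z₀ = ∑ᶠ i, analyticOrderAt (F i) z₀ := by
  have hsum : ∀ z ∈ D, Summable fun i ↦ ‖F i z - 1‖ := fun _ hz ↦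
    summable_norm_sub_one_of_eventually_le hu hFu hz
  have hanalytic : ∀ i, AnalyticAt ℂ (F i) z₀ := fun i ↦ (hF i).analyticAt (hD.mem_nhds hz₀)
  have hfinite := finite_setOf_eq_zero_of_summable_norm_sub_one (hsum z₀ hz₀)
  set s : Finset ι := hfinite.toFinset
  have hs : ∀ i ∉ s, F i z₀ ≠ 0 := fun i hi ↦ by rwa [hfinite.mem_toFinset] at hi
  let tail : ℂ → ℂ := fun z ↦ ∏' i : ↥(s : Set ι)ᶜ, F i z
  have htail : AnalyticAt ℂ tail z₀ := by
    refine (differentiableOn_tprod hD (fun i : ↥(s : Set ι)ᶜ ↦ hF i) (hu.subtype _)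
      fun K hKD hK ↦ ?_).analyticAt (hD.mem_nhds hz₀)
    exact Subtype.val_injective.tendsto_cofinite.eventually (hFu K hKD hK)
  have htail₀ : tail z₀ ≠ 0 :=
    tprod_ne_zero_of_summable_norm_sub_one ((hsum z₀ hz₀).subtype _) fun i ↦ hs i i.2
  have hsplit : (fun z ↦ ∏' i, F i z) =ᶠ[nhds z₀] (∏ i ∈ s, F i) * tail := by
    filter_upwards [hD.mem_nhds hz₀] with z hz
    rw [Pi.mul_apply, Finset.prod_apply]
    exact (prod_mul_tprod_compl_of_summable_norm_sub_one (hsum z hz) s).symm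
  have hsupport : Function.support (fun i ↦ analyticOrderAt (F i) z₀) ⊆ s := by
    refine Function.support_subset_iff'.2 fun i hi ↦ ?_
    exact (hanalytic i).analyticOrderAt_eq_zero.2 (hs i hi)
  calc analyticOrderAt (fun z ↦ ∏' i, F i z) z₀
      = analyticOrderAt (∏ i ∈ s, F i) z₀ + analyticOrderAt tail z₀ := by
        rw [analyticOrderAt_congr hsplit,
          analyticOrderAt_mul (s.analyticAt_prod fun i _ ↦ hanalytic i) htail]
    _ = ∑ i ∈ s, analyticOrderAt (F i) z₀ := by
        rw [htail.analyticOrderAt_eq_zero.2 htail₀, add_zero,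
          analyticOrderAt_finsetProd s fun i _ ↦ hanalytic i]
    _ = ∑ᶠ i, analyticOrderAt (F i) z₀ := (finsum_eq_sum_of_support_subset _ hsupport).symm

end InfiniteProduct

theorem exists_differentiableOn_analyticOrderAt_eq_finsum {ι : Type*} [Countable ι] {D : Set ℂ}
    (hD : IsOpen D) {c : ι → ℂ}
    (hc : ∀ K ⊆ D, IsCompact K → ∀ᶠ i in cofinite, c i ∉ K) (m : ι → ℕ) :
    ∃ g : ℂ → ℂ, DifferentiableOn ℂ g D ∧
      ∀ z ∈ D, analyticOrderAt g z = ∑ᶠ i, if z = c i then (m i : ℕ∞) else 0 := by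
  cases nonempty_encodable ι
  obtain ⟨ε, hε, _, hε_sum, -⟩ := posSumOfEncodable one_pos ι
  choose F hF hF_order hF_bound using fun i ↦
    exists_analyticOrderAt_eq_ite hD (c i) (m i) (hε i)
  have hFε : ∀ K ⊆ D, IsCompact K → ∀ᶠ i in cofinite, ∀ z ∈ K, ‖F i z - 1‖ ≤ ε i := by
    intro K hKD hK
    obtain ⟨r, hr, hKr⟩ := exists_subset_exhaustingSet hK hD hKD
    filter_upwards [hc _ exhaustingSet_subset (isCompact_exhaustingSet (r := 2 * r))] with i hi z hz
    exact hF_bound i r hr hi z (hKr hz)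
  refine ⟨fun z ↦ ∏' i, F i z, differentiableOn_tprod hD hF hε_sum.summable hFε, fun z hz ↦ ?_⟩
  rw [analyticOrderAt_tprod hD hF hε_sum.summable hFε hz]
  exact finsum_congr fun i ↦ hF_order i z hz

lemma eventually_notMem_of_forall_not_mapClusterPt {X ι : Type*} [TopologicalSpace X]
    {l : Filter ι} {c : ι → X} {D K : Set X} (hc : ∀ x ∈ D, ¬ MapClusterPt x l c) (hKD : K ⊆ D)
    (hK : IsCompact K) : ∀ᶠ i in l, c i ∉ K := by
  by_contra h
  obtain ⟨x, hx, hcluster⟩ := hK.exists_mapClusterPt_of_frequently (by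
    simpa only [not_eventually, not_not] using h)
  exact hc x (hKD hx) hcluster

theorem weierstrass_prescribed_zeros_general (D : Set ℂ) (hD : IsOpen D)
    (c : ℕ → ℂ) (hc : ∀ k, c k ∈ D) (hinj : Function.Injective c)
    (hacc : ∀ z ∈ D, ¬ MapClusterPt z Filter.atTop c)
    (m : ℕ → ℕ) (hm : ∀ k, 0 < m k) :
    ∃ g : ℂ → ℂ, DifferentiableOn ℂ g D ∧
      {z ∈ D | g z = 0} = Set.range c ∧
      ∀ k, (∀ j < m k, iteratedDeriv j g (c k) = 0) ∧
        iteratedDeriv (m k) g (c k) ≠ 0 := by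
  obtain ⟨g, hg, horder⟩ := exists_differentiableOn_analyticOrderAt_eq_finsum hD (c := c)
    (fun K hKD hK ↦ Nat.cofinite_eq_atTop ▸
      eventually_notMem_of_forall_not_mapClusterPt hacc hKD hK) m
  have hanalytic : ∀ z ∈ D, AnalyticAt ℂ g z := fun z hz ↦ hg.analyticAt (hD.mem_nhds hz)
  have horder_zero : ∀ k, analyticOrderAt g (c k) = m k := fun k ↦ by
    rw [horder _ (hc k), finsum_eq_single _ k fun j hj ↦ if_neg (hinj.ne hj.symm), if_pos rfl]
  refine ⟨g, hg, Subset.antisymm ?_ ?_, fun k ↦ ?_⟩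
  · rintro z ⟨hz, hgz⟩
    by_contra hzc
    refine (hanalytic z hz).analyticOrderAt_ne_zero.2 hgz ?_
    rw [horder z hz]
    exact finsum_eq_zero_of_forall_eq_zero fun k ↦ if_neg fun h ↦ hzc ⟨k, h.symm⟩
  · rintro _ ⟨k, rfl⟩
    refine ⟨hc k, apply_eq_zero_of_analyticOrderAt_ne_zero ?_⟩
    rw [horder_zero k]
    exact_mod_cast (hm k).ne'
  · exact (analyticOrderAt_eq_nat_iff_iteratedDeriv_eq_zero (hanalytic _ (hc k))).1
      (horder_zero k)

/-- Weierstrass theorem: on a nonempty domain `D ⊆ ℂ`, given a sequence of distinct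
points `c k ∈ D` with no accumulation point in `D` and prescribed multiplicities
`m k ≥ 1`, there is a holomorphic function on `D` whose zero set is exactly
`{c k : k ∈ ℕ}` and which vanishes to order exactly `m k` at `c k`. -/
theorem weierstrass_prescribed_zeros (D : Set ℂ) (hD : IsOpen D)
    (hDconn : IsConnected D) (c : ℕ → ℂ) (hc : ∀ k, c k ∈ D)
    (hinj : Function.Injective c)
    (hacc : ∀ z ∈ D, ¬ MapClusterPt z Filter.atTop c)
    (m : ℕ → ℕ) (hm : ∀ k, 0 < m k) :
    ∃ g : ℂ → ℂ, DifferentiableOn ℂ g D ∧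
      {z ∈ D | g z = 0} = Set.range c ∧
      ∀ k, (∀ j < m k, iteratedDeriv j g (c k) = 0) ∧
        iteratedDeriv (m k) g (c k) ≠ 0 :=
  weierstrass_prescribed_zeros_general D hD c hc hinj hacc m hm
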